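/- Let X be a set, 𝒞 a finite set of classes with at least two elements, and ρ > 0. For any two scoring functions f, f' : X × 𝒞 → ℝ, any x ∈ X and any y ∈ 𝒞, the pointwise triangle inequality holds: Φ^ρ(ρ_{f'}(x, h_f(x))) ≤ Φ^ρ(ρ_{f'}(x, y)) + Φ^ρ(ρ_f(x, y)). -/

import Mathlib

open MeasureTheory Real

/-- Ramp function `Φ^ρ`. -/
noncomputable def ramp (ρ t : ℝ) : ℝ := if t < 0 then 1 else if t ≤ ρ then 1 - t / ρ else 0

/-- Margin `ρ_f(x,c) = f(x,c) − max_{c'≠c} f(x,c')`. -/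
noncomputable def margin {X C : Type*} [Fintype C] [DecidableEq C] [Nontrivial C]
    (f : X × C → ℝ) (x : X) (c : C) : ℝ :=
  f (x, c) - (Finset.univ.erase c).sup'
    (by obtain ⟨b, hb⟩ := exists_ne c
        exact ⟨b, Finset.mem_erase.2 ⟨hb, Finset.mem_univ b⟩⟩)
    (fun c' => f (x, c'))

theorem ramp_nonneg (ρ t : ℝ) : 0 ≤ ramp ρ t := by
  unfold ramp
  split_ifs with ht htρ
  · exact zero_le_one
  · exact sub_nonneg.2 (div_le_one_of_le₀ htρ ((not_lt.1 ht).trans htρ))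
  · exact le_rfl

theorem ramp_le_one (ρ t : ℝ) : ramp ρ t ≤ 1 := by
  unfold ramp
  split_ifs with ht htρ
  · exact le_rfl
  · exact sub_le_self 1 (div_nonneg (not_lt.1 ht) ((not_lt.1 ht).trans htρ))
  · exact zero_le_one

theorem ramp_of_nonpos {ρ t : ℝ} (hρ : 0 ≤ ρ) (ht : t ≤ 0) : ramp ρ t = 1 := by
  rcases ht.lt_or_eq with ht | rfl
  · exact if_pos ht
  · simp [ramp, hρ]

section Margin

variable {X C : Type*} [Fintype C] [DecidableEq C] [Nontrivial C]

theorem margin_le_sub (f : X × C → ℝ) (x : X) {c y : C} (hcy : c ≠ y) :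
    margin f x y ≤ f (x, y) - f (x, c) :=
  sub_le_sub_left
    (Finset.le_sup' (fun c' => f (x, c')) (Finset.mem_erase.2 ⟨hcy, Finset.mem_univ c⟩)) _

theorem margin_nonpos {f : X × C → ℝ} {x : X} {c y : C} (hcy : c ≠ y)
    (hle : f (x, y) ≤ f (x, c)) : margin f x y ≤ 0 :=
  (margin_le_sub f x hcy).trans (sub_nonpos.2 hle)

theorem stmt1_general {ρ : ℝ} (hρ : 0 < ρ) {f : X × C → ℝ} (f' : X × C → ℝ) {x : X} {c y : C}
    (hle : f (x, y) ≤ f (x, c)) :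
    ramp ρ (margin f' x c) ≤ ramp ρ (margin f' x y) + ramp ρ (margin f x y) := by
  rcases eq_or_ne c y with rfl | hcy
  · exact le_add_of_nonneg_right (ramp_nonneg ρ _)
  · calc ramp ρ (margin f' x c)
      _ ≤ 1 := ramp_le_one ρ _
      _ = ramp ρ (margin f x y) := (ramp_of_nonpos hρ.le (margin_nonpos hcy hle)).symm
      _ ≤ ramp ρ (margin f' x y) + ramp ρ (margin f x y) :=
        le_add_of_nonneg_left (ramp_nonneg ρ _)

end Margin

/-- pointwise triangle inequality
`Φ^ρ(ρ_{f'}(x, h_f(x))) ≤ Φ^ρ(ρ_{f'}(x, y)) + Φ^ρ(ρ_f(x, y))`,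
where `am` is the fixed argmax tie-breaking rule inducing the classifier `h_f = am f`. -/
theorem stmt1 {X C : Type*} [Fintype C] [DecidableEq C] [Nontrivial C]
    (ρ : ℝ) (hρ : 0 < ρ)
    (am : (X × C → ℝ) → X → C)
    (ham : ∀ g : X × C → ℝ, ∀ x : X, ∀ c : C, g (x, c) ≤ g (x, am g x))
    (f f' : X × C → ℝ) (x : X) (y : C) :
    ramp ρ (margin f' x (am f x)) ≤ ramp ρ (margin f' x y) + ramp ρ (margin f x y) :=
  stmt1_general hρ f' (ham f x y)
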